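/- arXiv:2204.04919 — 2 statements merged into one kernel-verified Lean document; each statement's English description precedes it below -/
import Mathlib

section
/- Let μ be a probability measure on ℝ with a density f with respect to Lebesgue measure, let ε ∈ (0,1), and suppose the identity function is integrable with respect to μ. Define L(y) = ∫ (h - y) · ((1-ε) - indicator{h' : h' ≤ y}(h)) dμ(h). Then for every y ∈ ℝ at which the cumulative distribution function F(y) = μ(Iic y) is continuous, L is differentiable at y with derivative L'(y) = F(y) - (1-ε); equivalently, L'(y) = ε·F(y) - (1-ε)·(1 - F(y)). -/
/-!
Up to a term that is affine in the prediction `y`, the pinball loss is `(y - h)⁺`. This function of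
`y` is `1`-Lipschitz, and its derivative is `1` for `h < y` and `0` for `h > y`. Continuity of the
distribution function at `y` says that the kink `h = y` has mass zero, so dominated convergence
differentiates under the integral, and the derivatives average to `F(y)`.
-/

open MeasureTheory Set

/-- The pinball loss at level `τ` of the prediction `y` against the realization `h`. For `0 < τ < 1`
its expectation over `h` is minimized by the `τ`-quantiles. -/
noncomputable def pinballLoss (τ h y : ℝ) : ℝ :=
  (h - y) * (τ - (Iic y).indicator 1 h)

theorem pinballLoss_eq_mul_add_max (τ h y : ℝ) :
    pinballLoss τ h y = τ * (h - y) + max (y - h) 0 := by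
  by_cases hy : h ≤ y
  · rw [pinballLoss, indicator_of_mem (mem_Iic.2 hy), max_eq_left (sub_nonneg.2 hy), Pi.one_apply]
    ring
  · have hlt : y < h := not_le.1 hy
    rw [pinballLoss, indicator_of_notMem (notMem_Iic.2 hlt), max_eq_right (sub_nonpos.2 hlt.le)]
    ring

theorem lipschitzWith_max_sub_zero (x : ℝ) : LipschitzWith 1 fun t : ℝ => max (t - x) 0 := by
  simpa using (LipschitzWith.id.sub (LipschitzWith.const x)).max_const 0

theorem hasDerivAt_max_sub_zero {x y : ℝ} (hxy : x ≠ y) :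
    HasDerivAt (fun t => max (t - x) 0) ((Iic y).indicator 1 x) y := by
  rcases hxy.lt_or_gt with hlt | hgt
  · rw [indicator_of_mem (mem_Iic.2 hlt.le)]
    refine ((hasDerivAt_id y).sub_const x).congr_of_eventuallyEq ?_
    filter_upwards [lt_mem_nhds hlt] with t ht
    exact max_eq_left (sub_nonneg.2 ht.le)
  · rw [indicator_of_notMem (notMem_Iic.2 hgt)]
    refine (hasDerivAt_const y 0).congr_of_eventuallyEq ?_
    filter_upwards [gt_mem_nhds hgt] with t ht
    exact max_eq_right (sub_nonpos.2 ht.le)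

section RandomVariable

open Filter
open scoped Topology

variable {Ω : Type*} [MeasurableSpace Ω] {μ : Measure Ω} [IsFiniteMeasure μ]

theorem measure_preimage_singleton_eq_zero_of_continuousAt {α : Type*} [Preorder α]
    [TopologicalSpace α] [ClosedIicTopology α] [MeasurableSpace α] [OpensMeasurableSpace α]
    {X : Ω → α} (hX : AEMeasurable X μ) {y : α} [(𝓝[<] y).NeBot]
    (hy : ContinuousAt (fun t => μ.real (X ⁻¹' Iic t)) y) : μ (X ⁻¹' {y}) = 0 := by
  have atom_le : ∀ t < y, μ.real (X ⁻¹' {y}) ≤ μ.real (X ⁻¹' Iic y) - μ.real (X ⁻¹' Iic t) := by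
    intro t ht
    have disjoint_atom : Disjoint (X ⁻¹' {y}) (X ⁻¹' Iic t) :=
      Disjoint.preimage X (disjoint_singleton_left.2 ht.not_ge)
    rw [le_sub_iff_add_le, ← measureReal_union₀ (hX.nullMeasurableSet_preimage measurableSet_Iic)
      disjoint_atom.aedisjoint, ← preimage_union]
    exact measureReal_mono (preimage_mono
      (union_subset (singleton_subset_iff.2 self_mem_Iic) (Iic_subset_Iic.2 ht.le)))
  have increment_tendsto_zero :
      Tendsto (fun t => μ.real (X ⁻¹' Iic y) - μ.real (X ⁻¹' Iic t)) (𝓝[<] y) (𝓝 0) := by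
    simpa using (hy.tendsto.mono_left nhdsWithin_le_nhds).const_sub (μ.real (X ⁻¹' Iic y))
  have atom_nonpos : μ.real (X ⁻¹' {y}) ≤ 0 :=
    ge_of_tendsto increment_tendsto_zero (eventually_mem_nhdsWithin.mono atom_le)
  exact (measureReal_eq_zero_iff).1 (atom_nonpos.antisymm measureReal_nonneg)

variable {X : Ω → ℝ}

theorem integrable_max_sub_zero (hX : Integrable X μ) (t : ℝ) :
    Integrable (fun ω => max (t - X ω) 0) μ :=
  ((integrable_const t).sub hX).pos_part

theorem hasDerivAt_integral_max_sub_zero (hX : Integrable X μ) {y : ℝ}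
    (hy : μ (X ⁻¹' {y}) = 0) :
    HasDerivAt (fun t => ∫ ω, max (t - X ω) 0 ∂μ) (μ.real (X ⁻¹' Iic y)) y := by
  have hIic : NullMeasurableSet (X ⁻¹' Iic y) μ :=
    hX.aemeasurable.nullMeasurableSet_preimage measurableSet_Iic
  have hderiv : ∀ᵐ ω ∂μ, HasDerivAt (fun t => max (t - X ω) 0)
      ((X ⁻¹' Iic y).indicator 1 ω) y := by
    filter_upwards [measure_eq_zero_iff_ae_notMem.1 hy] with ω hω
    exact hasDerivAt_max_sub_zero hω
  have hlip : ∀ᵐ ω ∂μ, LipschitzOnWith (Real.nnabs 1) (fun t => max (t - X ω) 0) univ := by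
    refine .of_forall fun ω => ?_
    simpa using lipschitzWith_max_sub_zero (X ω)
  have hderiv_integral := (hasDerivAt_integral_of_dominated_loc_of_lip (bound := fun _ => 1)
    univ_mem (.of_forall fun t => (integrable_max_sub_zero hX t).aestronglyMeasurable)
    (integrable_max_sub_zero hX y) (aestronglyMeasurable_one.indicator₀ hIic) hlip
    (integrable_const 1) hderiv).2
  simpa [integral_indicator₀ hIic] using hderiv_integral

theorem integral_pinballLoss (hX : Integrable X μ) (τ t : ℝ) :
    ∫ ω, pinballLoss τ (X ω) t ∂μ =
      τ * ((∫ ω, X ω ∂μ) - t * μ.real univ) + ∫ ω, max (t - X ω) 0 ∂μ := by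
  have hsub : Integrable (fun ω => X ω - t) μ := hX.sub (integrable_const t)
  simp_rw [pinballLoss_eq_mul_add_max]
  rw [integral_add (hsub.const_mul τ) (integrable_max_sub_zero hX t),
    integral_const_mul, integral_sub hX (integrable_const t), integral_const, smul_eq_mul,
    mul_comm t]

theorem expected_pinball_loss_hasDerivAt_general (hX : Integrable X μ) (τ : ℝ) {y : ℝ}
    (hy : ContinuousAt (fun t => μ.real (X ⁻¹' Iic t)) y) :
    HasDerivAt (fun t => ∫ ω, pinballLoss τ (X ω) t ∂μ)
      (μ.real (X ⁻¹' Iic y) - τ * μ.real univ) y := by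
  have hatom : μ (X ⁻¹' {y}) = 0 :=
    measure_preimage_singleton_eq_zero_of_continuousAt hX.aemeasurable hy
  have hlinear : HasDerivAt (fun t => τ * ((∫ ω, X ω ∂μ) - t * μ.real univ))
      (τ * -μ.real univ) y := by
    simpa using (((hasDerivAt_id y).mul_const (μ.real univ)).const_sub (∫ ω, X ω ∂μ)).const_mul τ
  simp_rw [integral_pinballLoss hX]
  exact (hlinear.add (hasDerivAt_integral_max_sub_zero hX hatom)).congr_deriv (by ring)

end RandomVariable

/-- **Derivative of the expected pinball loss.**
If `μ` is a probability measure on `ℝ` with density `f` w.r.t. Lebesgue measure,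
`ε ∈ (0,1)`, the identity is integrable, and the CDF `F(y) = μ (Iic y)` is continuous
at `y`, then the expected pinball loss
`L(y) = ∫ (h - y) * ((1-ε) - 𝟙[h ≤ y]) dμ(h)` is differentiable at `y` with
derivative `F(y) - (1-ε)`. -/
theorem expected_pinball_loss_hasDerivAt
    (μ : Measure ℝ) [IsProbabilityMeasure μ] (f : ℝ → ENNReal)
    (hf : μ = MeasureTheory.volume.withDensity f)
    (ε : ℝ) (hε : ε ∈ Set.Ioo (0:ℝ) 1)
    (hint : Integrable (fun h : ℝ => h) μ)
    (L : ℝ → ℝ)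
    (hL : ∀ y : ℝ, L y =
      ∫ h, (h - y) * ((1 - ε) - Set.indicator {h' : ℝ | h' ≤ y} (fun _ => (1:ℝ)) h) ∂μ)
    (y : ℝ) (hFcont : ContinuousAt (fun t : ℝ => (μ (Set.Iic t)).toReal) y) :
    HasDerivAt L ((μ (Set.Iic y)).toReal - (1 - ε)) y := by
  obtain rfl : L = fun t => ∫ h, pinballLoss (1 - ε) h t ∂μ := funext hL
  simpa [Measure.real] using expected_pinball_loss_hasDerivAt_general hint (1 - ε) hFcont
end

section
/- Let (Ω, P) be a probability space, H, Ĥ : Ω → ℝ random variables, ε ∈ (0,1), and ρ ∈ ℝ. Define Q^{1-ε}(X) = sInf {y : ℝ | P(X ≤ y) ≥ 1-ε}. If H ≤ Ĥ + ρ almost surely and Q^{1-ε}(Ĥ) + ρ ≤ 0, then P(H ≤ 0) ≥ 1-ε. That is, the calibrated quantile condition on the surrogate Ĥ is an inner approximation of the joint chance constraint on H. -/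
open MeasureTheory Set

/-!
The distribution function `y ↦ P {X ≤ y}` is right continuous, so the infimum defining the
`p`-quantile of `X` is attained, and `quantile P X p ≤ t` is equivalent to `p ≤ P {X ≤ t}`. At
`t = -ρ` the calibration condition becomes `p ≤ P {Hhat ≤ -ρ}`, and almost everywhere
`Hhat ≤ -ρ` forces `H ≤ Hhat + ρ ≤ 0`.
-/

section Quantile

open Filter
open scoped ENNReal Topology

variable {Ω R : Type*}

theorem monotone_setOf_le [Preorder R] (X : Ω → R) : Monotone fun y ↦ {ω | X ω ≤ y} :=
  fun _ _ hyz _ hω ↦ le_trans hω hyz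

variable [MeasurableSpace Ω] {P : Measure Ω} {X : Ω → R} {p : ℝ≥0∞}

theorem isUpperSet_setOf_le_measure [Preorder R] (P : Measure Ω) (X : Ω → R) (p : ℝ≥0∞) :
    IsUpperSet {y | p ≤ P {ω | X ω ≤ y}} :=
  fun _ _ hyz hy ↦ le_trans hy (measure_mono (monotone_setOf_le X hyz))

theorem nonempty_setOf_le_measure [Preorder R] [IsDirectedOrder R]
    [(atTop : Filter R).IsCountablyGenerated] (hp : p < P univ) :
    {y | p ≤ P {ω | X ω ≤ y}}.Nonempty := by
  have hunion : ⋃ y, {ω | X ω ≤ y} = univ := iUnion_eq_univ_iff.2 fun ω ↦ ⟨X ω, le_rfl⟩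
  rw [← hunion, (monotone_setOf_le X).measure_iUnion, lt_iSup_iff] at hp
  obtain ⟨y, hy⟩ := hp
  exact ⟨y, hy.le⟩

theorem bddBelow_setOf_le_measure [LinearOrder R] [Nonempty R]
    [(atBot : Filter R).IsCountablyGenerated] [TopologicalSpace R] [ClosedIicTopology R]
    [MeasurableSpace R] [OpensMeasurableSpace R] [IsFiniteMeasure P]
    (hX : AEMeasurable X P) (hp : 0 < p) : BddBelow {y | p ≤ P {ω | X ω ≤ y}} := by
  by_contra hbdd
  rw [not_bddBelow_iff] at hbdd
  have hall (y : R) : p ≤ P {ω | X ω ≤ y} := by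
    obtain ⟨z, hz, hzy⟩ := hbdd y
    exact isUpperSet_setOf_le_measure P X p hzy.le hz
  have hinter : ⋂ y, {ω | X ω ≤ y} = ∅ := by
    refine iInter_eq_empty_iff.2 fun ω ↦ ?_
    obtain ⟨y, -, hy⟩ := hbdd (X ω)
    exact ⟨y, hy.not_ge⟩
  have hzero : ⨅ y, P {ω | X ω ≤ y} = 0 := by
    rw [← (monotone_setOf_le X).measure_iInter
      (fun y ↦ hX.nullMeasurableSet_preimage measurableSet_Iic)
      ⟨Classical.arbitrary R, measure_ne_top P _⟩, hinter, measure_empty]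
  exact hp.not_ge (hzero ▸ le_iInf hall)

theorem le_measure_setOf_le_of_tendsto [Preorder R] [TopologicalSpace R] [OrderClosedTopology R]
    [MeasurableSpace R] [OpensMeasurableSpace R] [IsFiniteMeasure P]
    (hX : AEMeasurable X P) {u : ℕ → R} {y : R} (hu : Antitone u) (huy : Tendsto u atTop (𝓝 y))
    (hp : ∀ n, p ≤ P {ω | X ω ≤ u n}) : p ≤ P {ω | X ω ≤ y} := by
  have hinter : ⋂ n, {ω | X ω ≤ u n} = {ω | X ω ≤ y} := by
    ext ω
    simp only [mem_iInter, mem_ofPred_eq]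
    exact ⟨ge_of_tendsto' huy, fun hω n ↦ hω.trans (hu.le_of_tendsto huy n)⟩
  have hanti : Antitone fun n ↦ {ω | X ω ≤ u n} := (monotone_setOf_le X).comp_antitone hu
  rw [← hinter, hanti.measure_iInter (fun n ↦ hX.nullMeasurableSet_preimage measurableSet_Iic)
    ⟨0, measure_ne_top P _⟩]
  exact le_iInf hp

/-- The lower `p`-quantile of `X` under `P`; the level `p = 1 - ε` gives the paper's
`Q^{1-ε}(X)`. For real `X` it is the junk value `0` when `p = 0` or when `p` exceeds every
`P {X ≤ y}`. -/
noncomputable def quantile [LE R] [InfSet R] (P : Measure Ω) (X : Ω → R) (p : ℝ≥0∞) : R :=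
  sInf {y | p ≤ P {ω | X ω ≤ y}}

variable [ConditionallyCompleteLinearOrder R] [TopologicalSpace R] [OrderTopology R]
  [FirstCountableTopology R] [(atTop : Filter R).IsCountablyGenerated]
  [(atBot : Filter R).IsCountablyGenerated] [MeasurableSpace R] [OpensMeasurableSpace R]
  [IsFiniteMeasure P]

theorem isLeast_quantile (hX : AEMeasurable X P) (hp : p ∈ Ioo 0 (P univ)) :
    IsLeast {y | p ≤ P {ω | X ω ≤ y}} (quantile P X p) := by
  have hne : {y | p ≤ P {ω | X ω ≤ y}}.Nonempty := nonempty_setOf_le_measure hp.2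
  have : Nonempty R := hne.nonempty
  have hbdd : BddBelow {y | p ≤ P {ω | X ω ≤ y}} := bddBelow_setOf_le_measure hX hp.1
  obtain ⟨u, hu, hlim, hmem⟩ := exists_seq_tendsto_sInf hne hbdd
  exact ⟨le_measure_setOf_le_of_tendsto hX hu hlim hmem, fun _ ↦ csInf_le hbdd⟩

theorem quantile_le_iff (hX : AEMeasurable X P) (hp : p ∈ Ioo 0 (P univ)) {t : R} :
    quantile P X p ≤ t ↔ p ≤ P {ω | X ω ≤ t} :=
  have hleast := isLeast_quantile hX hp
  ⟨fun ht ↦ isUpperSet_setOf_le_measure P X p ht hleast.1, fun ht ↦ hleast.2 ht⟩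

end Quantile

theorem chance_constraint_of_calibrated_quantile_general
    {Ω : Type*} [MeasurableSpace Ω] {P : Measure Ω} [IsFiniteMeasure P] {H Hhat : Ω → ℝ}
    (hHhat : AEMeasurable Hhat P) {p : ENNReal} (hp : p ∈ Ioo 0 (P univ)) {ρ : ℝ}
    (hdom : ∀ᵐ ω ∂P, H ω ≤ Hhat ω + ρ) (hcal : quantile P Hhat p + ρ ≤ 0) :
    p ≤ P {ω | H ω ≤ 0} := by
  have hquant : p ≤ P {ω | Hhat ω ≤ -ρ} :=
    (quantile_le_iff hHhat hp).1 (le_neg_iff_add_nonpos_right.2 hcal)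
  refine hquant.trans (measure_mono_ae ?_)
  filter_upwards [hdom] with ω hω (hle : Hhat ω ≤ -ρ)
  exact hω.trans (le_neg_iff_add_nonpos_right.1 hle)

/-- **Calibrated surrogate quantile condition is an inner approximation of the
joint chance constraint.** If `H ≤ Ĥ + ρ` almost surely and the calibrated
`(1-ε)`-quantile of `Ĥ` is nonpositive, then `P(H ≤ 0) ≥ 1-ε`. -/
theorem chance_constraint_of_calibrated_quantile
    {Ω : Type*} [MeasurableSpace Ω] (P : Measure Ω) [IsProbabilityMeasure P]
    (H Hhat : Ω → ℝ) (hH : Measurable H) (hHhat : Measurable Hhat)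
    (ε ρ : ℝ) (hε : ε ∈ Set.Ioo (0:ℝ) 1)
    (hdom : ∀ᵐ ω ∂P, H ω ≤ Hhat ω + ρ)
    (hcal : sInf {y : ℝ | ENNReal.ofReal (1 - ε) ≤ P {ω | Hhat ω ≤ y}} + ρ ≤ 0) :
    ENNReal.ofReal (1 - ε) ≤ P {ω | H ω ≤ 0} :=
  chance_constraint_of_calibrated_quantile_general hHhat.aemeasurable
    (by simpa [and_comm] using hε) hdom hcal
end
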